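/- Let d ≥ 2, let p be a symmetric probability mass function on ℤ, and suppose ψ(s) := Σ_{j∈ℤ} e^{sj} p(j) < ∞ for all s ∈ (−R, R), where R > 0. Let H be the almost-sure limit of the spherical averages H_r of the free height field with increment law p on the rooted Cayley tree of order d (this limit exists). Then for every real t with |t| < (d+1)R one has E[exp(tH)] < ∞, E[exp(tH)] = lim_{r→∞} E[exp(t H_r)], and log E[exp(tH)] = Σ_{l=0}^{∞} (d+1) d^l · log ψ( t / ((d+1)d^l) ), the series converging absolutely. -/

import Mathlib

open MeasureTheory ProbabilityTheory Filter Finset Topology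

noncomputable section

/-- A non-root vertex of the rooted Cayley tree of order `d`: the first step from the
root is one of `d+1` children, every further step one of `d` children. -/
abbrev Vertex (d : ℕ) : Type := Fin (d + 1) × List (Fin d)

/-- depth of a non-root vertex -/
def vdepth {d : ℕ} (v : Vertex d) : ℕ := v.2.length + 1

/-- the sphere `W_r` of radius `r ≥ 1`: all vertices of depth `r` -/
def sphereW (d r : ℕ) : Finset (Vertex d) :=
  (Finset.univ : Finset (Fin (d + 1) × (Fin (r - 1) → Fin d))).image
    (fun x => (x.1, List.ofFn x.2))

/-- height at `v`: sum of the increments along the path from the root to `v`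
(the prefixes of length `0,…,|v.2|` of the step list of `v` enumerate that path). -/
def heightAt {d : ℕ} {Ω : Type*} (Y : Vertex d → Ω → ℝ) (v : Vertex d) (ω : Ω) : ℝ :=
  ∑ k ∈ Finset.range (v.2.length + 1), Y (v.1, v.2.take k) ω

/-- spherical average `H_r` of the heights at depth `r` -/
def sphAvg (d : ℕ) {Ω : Type*} (Y : Vertex d → Ω → ℝ) (r : ℕ) (ω : Ω) : ℝ :=
  (((d + 1) * d ^ (r - 1) : ℕ) : ℝ)⁻¹ * ∑ v ∈ sphereW d r, heightAt Y v ω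

/-!
Each vertex of depth `l + 1` contributes its increment to `H_{n+1}` (`l ≤ n`) with weight
`1 / |W_{l+1}| = 1 / ((d + 1) d ^ l)`, so by independence the cumulant generating function of
`H_{n+1}` at `t` is the sum of `(d + 1) d ^ l * log ψ (t / ((d + 1) d ^ l))` over `l ≤ n`.
A centered law has `log ψ s = O(s²)` at `0`, by analyticity, so the terms are `O(d ^ (-l))` and the
series converges absolutely. The same convergence at `q * t` for some `q > 1` bounds `exp (t * H_n)`
in `L^q`; this gives uniform integrability and lets the limit pass through the expectation.
-/

open scoped ENNReal NNReal
open Asymptotics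

section UniformIntegrability

variable {Ω ι E : Type*} {mΩ : MeasurableSpace Ω} {μ : Measure Ω} [NormedAddCommGroup E]

theorem eLpNorm_indicator_le_eLpNorm_mul_rpow_measure {f : Ω → E} {p q : ℝ≥0∞} (hpq : p ≤ q)
    (hf : AEStronglyMeasurable f μ) {s : Set Ω} (hs : MeasurableSet s) :
    eLpNorm (s.indicator f) p μ ≤ eLpNorm f q μ * μ s ^ (1 / p.toReal - 1 / q.toReal) := by
  rw [eLpNorm_indicator_eq_eLpNorm_restrict hs]
  have hHolder := eLpNorm_le_eLpNorm_mul_rpow_measure_univ hpq (hf.restrict (s := s))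
  rw [Measure.restrict_apply_univ] at hHolder
  exact hHolder.trans (mul_le_mul_left (eLpNorm_restrict_le f q μ s) _)

theorem uniformIntegrable_of_eLpNorm_le [IsFiniteMeasure μ] {f : ι → Ω → E} {p q : ℝ≥0∞}
    (hp : p ≠ 0) (hpq : p < q) (hf : ∀ i, AEStronglyMeasurable (f i) μ) {C : ℝ≥0}
    (hC : ∀ i, eLpNorm (f i) q μ ≤ C) : UniformIntegrable f p μ := by
  set a : ℝ := 1 / p.toReal - 1 / q.toReal with ha
  have ha_pos : 0 < a := by
    have hp_top : p ≠ ∞ := hpq.ne_top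
    rcases eq_or_ne q ∞ with rfl | hq
    · simpa [ha] using ENNReal.toReal_pos hp hp_top
    · exact sub_pos.2 (one_div_lt_one_div_of_lt (ENNReal.toReal_pos hp hp_top)
        ((ENNReal.toReal_lt_toReal hp_top hq).2 hpq))
  have hbound : ∀ i s, MeasurableSet s → eLpNorm (s.indicator (f i)) p μ ≤ C * μ s ^ a :=
    fun i s hs => (eLpNorm_indicator_le_eLpNorm_mul_rpow_measure hpq.le (hf i) hs).trans
      (mul_le_mul_left (hC i) _)
  refine ⟨hf, fun ε hε => ?_, (C * μ Set.univ ^ a).toNNReal, fun i => ?_⟩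
  · have hlim : Tendsto (fun δ : ℝ => C * ENNReal.ofReal δ ^ a) (𝓝[>] 0) (𝓝 0) := by
      have hofReal : Tendsto ENNReal.ofReal (𝓝[>] 0) (𝓝 0) := by
        simpa using (ENNReal.continuous_ofReal.tendsto 0).mono_left nhdsWithin_le_nhds
      simpa [ENNReal.zero_rpow_of_pos ha_pos] using
        ENNReal.Tendsto.const_mul (hofReal.ennrpow_const a) (.inr ENNReal.coe_ne_top)
    obtain ⟨δ, hδ, hδ_pos⟩ :=
      ((hlim.eventually (ge_mem_nhds (ENNReal.ofReal_pos.2 hε))).and self_mem_nhdsWithin).exists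
    exact ⟨δ, hδ_pos, fun i s hs hμs => (hbound i s hs).trans (le_trans (by gcongr) hδ)⟩
  · rw [ENNReal.coe_toNNReal (by finiteness)]
    simpa using hbound i Set.univ .univ

end UniformIntegrability

section MomentGeneratingFunctions

variable {Ω : Type*} {mΩ : MeasurableSpace Ω} {μ : Measure Ω}

theorem eLpNorm_exp_eq_mgf_rpow {X : Ω → ℝ} {q : ℝ} (hq : 0 < q)
    (hX : Integrable (fun ω => Real.exp (q * X ω)) μ) :
    eLpNorm (fun ω => Real.exp (X ω)) (ENNReal.ofReal q) μ =
      ENNReal.ofReal (mgf X μ q) ^ (1 / q) := by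
  rw [eLpNorm_eq_lintegral_rpow_enorm_toReal (by simpa using hq) ENNReal.ofReal_ne_top,
    ENNReal.toReal_ofReal hq.le, mgf,
    ofReal_integral_eq_lintegral_ofReal hX (ae_of_all _ fun ω => (Real.exp_pos _).le)]
  congr! 3 with ω
  rw [Real.enorm_eq_ofReal (Real.exp_pos _).le, ENNReal.ofReal_rpow_of_pos (Real.exp_pos _),
    ← Real.exp_mul, mul_comm]

theorem uniformIntegrable_exp_of_mgf_le {ι : Type*} [IsFiniteMeasure μ] {X : ι → Ω → ℝ} {q C : ℝ}
    (hq : 1 < q) (hX : ∀ i, AEMeasurable (X i) μ)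
    (hint : ∀ i, Integrable (fun ω => Real.exp (q * X i ω)) μ) (hC : ∀ i, mgf (X i) μ q ≤ C) :
    UniformIntegrable (fun i ω => Real.exp (X i ω)) 1 μ := by
  refine uniformIntegrable_of_eLpNorm_le (q := ENNReal.ofReal q)
    (C := (ENNReal.ofReal C ^ (1 / q)).toNNReal) one_ne_zero (by simpa using hq)
    (fun i => (hX i).exp.aestronglyMeasurable) fun i => ?_
  have hq_pos : 0 < q := one_pos.trans hq
  rw [ENNReal.coe_toNNReal (by finiteness), eLpNorm_exp_eq_mgf_rpow hq_pos (hint i)]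
  gcongr
  exact hC i

theorem integrable_exp_and_tendsto_mgf_of_mgf_le [IsFiniteMeasure μ] {X : ℕ → Ω → ℝ} {Z : Ω → ℝ}
    {q t C : ℝ} (hq : 1 < q) (hX : ∀ n, AEMeasurable (X n) μ)
    (hint : ∀ n, Integrable (fun ω => Real.exp (q * t * X n ω)) μ)
    (hC : ∀ n, mgf (X n) μ (q * t) ≤ C) (hXZ : ∀ᵐ ω ∂μ, Tendsto (X · ω) atTop (𝓝 (Z ω))) :
    Integrable (fun ω => Real.exp (t * Z ω)) μ ∧
      Tendsto (fun n => mgf (X n) μ t) atTop (𝓝 (mgf Z μ t)) := by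
  have hui : UniformIntegrable (fun n ω => Real.exp (t * X n ω)) 1 μ :=
    uniformIntegrable_exp_of_mgf_le hq (fun n => (hX n).const_mul t)
      (by simpa only [mul_assoc] using hint) (C := C) (by simpa only [mgf, mul_assoc] using hC)
  have hlim : ∀ᵐ ω ∂μ, Tendsto (fun n => Real.exp (t * X n ω)) atTop (𝓝 (Real.exp (t * Z ω))) :=
    hXZ.mono fun ω hω => (hω.const_mul t).rexp
  have hZ := hui.integrable_of_ae_tendsto hlim
  refine ⟨hZ, tendsto_integral_of_L1' _ hZ.1
    (.of_forall fun n => memLp_one_iff_integrable.1 (hui.memLp n)) ?_⟩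
  exact tendsto_Lp_finite_of_tendsto_ae le_rfl ENNReal.one_ne_top hui.1
    (memLp_one_iff_integrable.2 hZ) hui.unifIntegrable hlim

theorem isBigO_sub_sub_smul_deriv_of_analyticAt {𝕜 E : Type*} [NontriviallyNormedField 𝕜]
    [NormedAddCommGroup E] [NormedSpace 𝕜 E] {f : 𝕜 → E} {x : 𝕜} (hf : AnalyticAt 𝕜 f x) :
    (fun h => f (x + h) - f x - h • deriv f x) =O[𝓝 0] fun h => ‖h‖ ^ 2 := by
  obtain ⟨p, hp⟩ := hf
  have hcoeff_zero : p.coeff 0 = f x := hp.coeff_zero _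
  have hcoeff_one : p.coeff 1 = deriv f x := hp.deriv.symm
  simpa [FormalMultilinearSeries.partialSum, sum_range_succ, hcoeff_zero, hcoeff_one, sub_sub]
    using hp.isBigO_sub_partialSum_pow 2

theorem cgf_isBigO_sq [IsProbabilityMeasure μ] {X : Ω → ℝ}
    (hX : 0 ∈ interior (integrableExpSet X μ)) (hmean : μ[X] = 0) :
    cgf X μ =O[𝓝 0] fun s => s ^ 2 := by
  simpa [deriv_cgf_zero hX, hmean] using isBigO_sub_sub_smul_deriv_of_analyticAt (analyticAt_cgf hX)

theorem summable_mul_cgf_div {ι : Type*} [IsProbabilityMeasure μ] {X : Ω → ℝ}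
    (hX : 0 ∈ interior (integrableExpSet X μ)) (hmean : μ[X] = 0) {c : ι → ℝ}
    (hc : Summable fun i => (c i)⁻¹) (t : ℝ) : Summable fun i => c i * cgf X μ (t / c i) := by
  have hlim : Tendsto (fun i => t / c i) cofinite (𝓝 0) := by
    simpa [div_eq_mul_inv] using hc.tendsto_cofinite_zero.const_mul t
  refine summable_of_isBigO (hc.mul_left (t ^ 2)) ?_
  refine ((isBigO_refl c cofinite).mul
    ((cgf_isBigO_sq hX hmean).comp_tendsto hlim)).congr_right fun i => ?_
  rcases eq_or_ne (c i) 0 with h | h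
  · simp [h]
  · simp only [Function.comp_apply]
    field_simp

theorem cgf_const_mul (X : Ω → ℝ) (a t : ℝ) : cgf (fun ω => a * X ω) μ t = cgf X μ (a * t) := by
  rw [cgf, cgf, mgf_const_mul]

theorem integrable_exp_and_cgf_sum_const_mul {ι : Type*} {ν : Measure ℝ} {Y : ι → Ω → ℝ}
    (hindep : iIndepFun Y μ) (hlaw : ∀ i, HasLaw (Y i) ν μ) {a : ι → ℝ} {s : Finset ι} {t : ℝ}
    (ht : ∀ i ∈ s, a i * t ∈ integrableExpSet id ν) :
    Integrable (fun ω => Real.exp (t * (∑ i ∈ s, fun ω => a i * Y i ω) ω)) μ ∧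
      cgf (∑ i ∈ s, fun ω => a i * Y i ω) μ t = ∑ i ∈ s, cgf id ν (a i * t) := by
  have : IsProbabilityMeasure μ := hindep.isProbabilityMeasure
  have hmgf (i : ι) : mgf (Y i) μ = mgf id ν := by
    rw [← (hlaw i).map_eq, mgf_id_map (hlaw i).aemeasurable]
  have hindep_mul : iIndepFun (fun i ω => a i * Y i ω) μ :=
    hindep.comp _ fun i => measurable_const_mul _
  have hmeas (i : ι) : AEMeasurable (fun ω => a i * Y i ω) μ := (hlaw i).aemeasurable.const_mul _
  have hint (i : ι) (hi : i ∈ s) : Integrable (fun ω => Real.exp (t * (a i * Y i ω))) μ := by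
    have hmem := ht i hi
    rw [← integrableExpSet_eq_of_mgf (hmgf i), integrableExpSet, Set.mem_ofPred_eq] at hmem
    simpa only [mul_comm (a i), mul_assoc] using hmem
  constructor
  · refine .of_integral_ne_zero ?_
    rw [← mgf, hindep_mul.mgf_sum₀ hmeas]
    exact prod_ne_zero_iff.2 fun i hi => (mgf_pos (hint i hi)).ne'
  · rw [hindep_mul.cgf_sum₀ hmeas hint]
    exact sum_congr rfl fun i _ => by rw [cgf_const_mul, cgf, cgf, hmgf]

theorem integral_id_eq_zero_of_isNegInvariant (ν : Measure ℝ) [ν.IsNegInvariant] :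
    ∫ x, x ∂ν = 0 := by
  have h := integral_neg_eq_self (fun x : ℝ => x) ν
  rw [integral_neg] at h
  exact neg_eq_self.1 h

end MomentGeneratingFunctions

section Law

variable {p : ℤ → ℝ}

/-- The measure on `ℝ` with mass `p j` at each integer `j`: the law of a real increment whose
probability mass function is `p`. Negative values of `p` are read as `0`. -/
def intLaw (p : ℤ → ℝ) : Measure ℝ :=
  Measure.sum fun j : ℤ => ENNReal.ofReal (p j) • Measure.dirac (j : ℝ)

theorem mem_integrableExpSet_intLaw_iff (hp : ∀ j, 0 ≤ p j) {s : ℝ} :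
    s ∈ integrableExpSet id (intLaw p) ↔ Summable fun j : ℤ => Real.exp (s * j) * p j := by
  simp only [integrableExpSet, intLaw, Set.mem_ofPred_eq, id,
    integrable_sum_dirac_iff fun _ => ENNReal.ofReal_ne_top, ENNReal.toReal_ofReal (hp _),
    Real.norm_eq_abs, Real.abs_exp, mul_comm]

theorem mgf_id_intLaw (hp : ∀ j, 0 ≤ p j) (s : ℝ) :
    mgf id (intLaw p) s = ∑' j : ℤ, Real.exp (s * j) * p j := by
  simp only [mgf, intLaw, id, integral_sum_dirac fun _ => ENNReal.ofReal_ne_top,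
    ENNReal.toReal_ofReal (hp _), smul_eq_mul, mul_comm]

theorem isNegInvariant_intLaw (hp : ∀ j, p (-j) = p j) : (intLaw p).IsNegInvariant := by
  refine ⟨?_⟩
  rw [Measure.neg, intLaw, Measure.map_sum measurable_neg.aemeasurable]
  simp only [Measure.map_smul, Measure.map_dirac' measurable_neg]
  rw [← Measure.sum_comp_equiv (Equiv.neg ℤ)]
  simp [Function.comp_def, hp]

theorem hasLaw_intLaw {Ω : Type*} {mΩ : MeasurableSpace Ω} {P : Measure Ω} {Y : Ω → ℤ}
    (hY : Measurable Y) (hlaw : ∀ j : ℤ, P {ω | Y ω = j} = ENNReal.ofReal (p j)) :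
    HasLaw (fun ω => (Y ω : ℝ)) (intLaw p) P where
  aemeasurable := by fun_prop
  map_eq := by
    have hpt : ∀ j, P (Y ⁻¹' {j}) = ENNReal.ofReal (p j) := hlaw
    rw [← Function.comp_def, ← Measure.map_map (by fun_prop) hY, Measure.map_eq_sum P Y hY,
      Measure.map_sum (by fun_prop)]
    simp_rw [hpt, Measure.map_smul, Measure.map_dirac' (measurable_of_countable _), intLaw]

end Law

section CayleyTree

variable {d : ℕ}

theorem injective_vertex_ofFn (d n : ℕ) :
    Function.Injective fun x : Fin (d + 1) × (Fin n → Fin d) => ((x.1, List.ofFn x.2) : Vertex d) :=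
  Function.injective_id.prodMap List.ofFn_injective

theorem sum_sphereW {M : Type*} [AddCommMonoid M] (n : ℕ) (f : Vertex d → M) :
    ∑ v ∈ sphereW d (n + 1), f v =
      ∑ i : Fin (d + 1), ∑ x : Fin n → Fin d, f (i, List.ofFn x) := by
  rw [sphereW, sum_image (injective_vertex_ofFn d _).injOn, Fintype.sum_prod_type]
  rfl

theorem card_sphereW (d n : ℕ) : #(sphereW d (n + 1)) = (d + 1) * d ^ n := by
  simp [sphereW, card_image_of_injective _ (injective_vertex_ofFn d _)]

theorem length_of_mem_sphereW {n : ℕ} {v : Vertex d} (hv : v ∈ sphereW d (n + 1)) :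
    v.2.length = n := by
  obtain ⟨x, -, rfl⟩ := mem_image.1 hv
  exact List.length_ofFn

theorem sum_sphereW_succ {M : Type*} [AddCommMonoid M] (n : ℕ) (f : Vertex d → M) :
    ∑ v ∈ sphereW d (n + 2), f v =
      ∑ v ∈ sphereW d (n + 1), ∑ a : Fin d, f (v.1, v.2 ++ [a]) := by
  rw [sum_sphereW, sum_sphereW]
  refine sum_congr rfl fun i _ => ?_
  rw [← (Fin.snocEquiv fun _ => Fin d).sum_comp, Fintype.sum_prod_type_right]
  simp only [Fin.snocEquiv, Equiv.coe_fn_mk, List.ofFn_succ', Fin.snoc_castSucc, Fin.snoc_last,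
    List.concat_eq_append]

variable {Ω : Type*}

theorem heightAt_append (Y : Vertex d → Ω → ℝ) (v : Vertex d) (a : Fin d) (ω : Ω) :
    heightAt Y (v.1, v.2 ++ [a]) ω = heightAt Y v ω + Y (v.1, v.2 ++ [a]) ω := by
  rw [heightAt, heightAt, List.length_append, List.length_singleton, sum_range_succ,
    List.take_of_length_le (by simp)]
  congr 1
  refine sum_congr rfl fun k hk => ?_
  rw [List.take_append_of_le_length (Nat.lt_succ_iff.1 (mem_range.1 hk))]

theorem sphAvg_succ (hd : d ≠ 0) (Y : Vertex d → Ω → ℝ) (n : ℕ) (ω : Ω) :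
    sphAvg d Y (n + 2) ω = sphAvg d Y (n + 1) ω +
      ((d + 1) * d ^ (n + 1) : ℝ)⁻¹ * ∑ v ∈ sphereW d (n + 2), Y v ω := by
  simp only [sphAvg, Nat.add_sub_cancel, sum_sphereW_succ, heightAt_append, sum_add_distrib,
    sum_const, card_univ, Fintype.card_fin, nsmul_eq_mul, ← mul_sum]
  push_cast
  field_simp
  ring

/-- The non-root vertices of depth at most `n`. -/
def ballW (d n : ℕ) : Finset (Vertex d) := (range n).biUnion fun l => sphereW d (l + 1)

theorem sum_ballW {M : Type*} [AddCommMonoid M] (n : ℕ) (f : Vertex d → M) :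
    ∑ v ∈ ballW d n, f v = ∑ l ∈ range n, ∑ v ∈ sphereW d (l + 1), f v :=
  sum_biUnion fun _ _ _ _ hlm => Finset.disjoint_left.2 fun _ hl hm =>
    hlm ((length_of_mem_sphereW hl).symm.trans (length_of_mem_sphereW hm))

theorem sphAvg_eq_sum_ballW (hd : d ≠ 0) (Y : Vertex d → Ω → ℝ) (n : ℕ) :
    sphAvg d Y (n + 1) =
      ∑ v ∈ ballW d (n + 1), fun ω => ((d + 1) * d ^ v.2.length : ℝ)⁻¹ * Y v ω := by
  ext ω
  rw [Finset.sum_apply, sum_ballW]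
  induction n with
  | zero => simp [sphAvg, sum_sphereW, heightAt, mul_sum]
  | succ n ih =>
    rw [sum_range_succ, ← ih, sphAvg_succ hd, mul_sum]
    congr 1
    refine sum_congr rfl fun v hv => ?_
    rw [length_of_mem_sphereW hv]

end CayleyTree

section FreeHeightField

variable {Ω : Type*} {mΩ : MeasurableSpace Ω} {P : Measure Ω} {d : ℕ} {ν : Measure ℝ}
  {Y : Vertex d → Ω → ℝ}

theorem aemeasurable_sphAvg (hY : ∀ v, AEMeasurable (Y v) P) (r : ℕ) :
    AEMeasurable (sphAvg d Y r) P := by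
  unfold sphAvg heightAt
  fun_prop

theorem integrable_exp_and_cgf_sphAvg (hd : d ≠ 0) (hindep : iIndepFun Y P)
    (hlaw : ∀ v, HasLaw (Y v) ν P) {t : ℝ}
    (ht : ∀ l : ℕ, t / ((d + 1) * d ^ l) ∈ integrableExpSet id ν) (n : ℕ) :
    Integrable (fun ω => Real.exp (t * sphAvg d Y (n + 1) ω)) P ∧
      cgf (sphAvg d Y (n + 1)) P t =
        ∑ l ∈ range (n + 1), ((d + 1) * d ^ l : ℝ) * cgf id ν (t / ((d + 1) * d ^ l)) := by
  simp_rw [div_eq_inv_mul] at ht ⊢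
  rw [sphAvg_eq_sum_ballW hd]
  obtain ⟨hint, hcgf⟩ := integrable_exp_and_cgf_sum_const_mul hindep hlaw (s := ballW d (n + 1))
    fun v _ => ht v.2.length
  refine ⟨hint, hcgf.trans ?_⟩
  rw [sum_ballW]
  refine sum_congr rfl fun l _ => ?_
  rw [sum_congr rfl fun v hv => by rw [length_of_mem_sphereW hv], sum_const,
    card_sphereW, nsmul_eq_mul]
  push_cast
  rfl

theorem div_mem_Ioo_of_abs_lt {R t : ℝ} (hd : d ≠ 0) (ht : |t| < (d + 1) * R) (l : ℕ) :
    t / ((d + 1) * d ^ l) ∈ Set.Ioo (-R) R := by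
  have hR : 0 < R := pos_of_mul_pos_right ((abs_nonneg t).trans_lt ht) (by positivity)
  have hpow : (1 : ℝ) ≤ d ^ l := one_le_pow₀ (Nat.one_le_cast.2 (Nat.one_le_iff_ne_zero.2 hd))
  have hc : (0 : ℝ) < (d + 1) * d ^ l := by positivity
  rw [Set.mem_Ioo, ← abs_lt, abs_div, abs_of_pos hc, div_lt_iff₀' hc]
  refine ht.trans_le (mul_le_mul_of_nonneg_right ?_ hR.le)
  exact le_mul_of_one_le_right (by positivity) hpow

theorem summable_inv_card_sphereW (hd : 2 ≤ d) :
    Summable fun l : ℕ => ((d + 1) * d ^ l : ℝ)⁻¹ := by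
  have hd_inv : (d : ℝ)⁻¹ < 1 := inv_lt_one_of_one_lt₀ (Nat.one_lt_cast.2 hd)
  simpa only [mul_inv, inv_pow] using
    (summable_geometric_of_lt_one (by positivity) hd_inv).mul_left ((d + 1 : ℝ)⁻¹)

theorem exists_one_lt_abs_mul_lt {t M : ℝ} (ht : |t| < M) : ∃ q, 1 < q ∧ |q * t| < M := by
  have hcont : Tendsto (fun q : ℝ => |q * t|) (𝓝[>] 1) (𝓝 |t|) :=
    (Continuous.tendsto' (by fun_prop) 1 |t| (by simp)).mono_left nhdsWithin_le_nhds
  exact (eventually_mem_nhdsWithin.and (hcont.eventually_lt_const ht)).exists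

theorem free_limit_mgf_general (hd : 2 ≤ d) (hindep : iIndepFun Y P)
    (hlaw : ∀ v, HasLaw (Y v) ν P) {R : ℝ} (hν : Set.Ioo (-R) R ⊆ integrableExpSet id ν)
    (hmean : ∫ x, x ∂ν = 0) {H : Ω → ℝ}
    (hH : ∀ᵐ ω ∂P, Tendsto (fun r => sphAvg d Y r ω) atTop (𝓝 (H ω)))
    {t : ℝ} (ht : |t| < (d + 1) * R) :
    Integrable (fun ω => Real.exp (t * H ω)) P ∧
      Tendsto (fun r => mgf (sphAvg d Y r) P t) atTop (𝓝 (mgf H P t)) ∧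
      HasSum (fun l : ℕ => ((d + 1) * d ^ l : ℝ) * cgf id ν (t / ((d + 1) * d ^ l)))
        (cgf H P t) := by
  have hd0 : d ≠ 0 := by lia
  have : IsProbabilityMeasure P := hindep.isProbabilityMeasure
  have : IsProbabilityMeasure ν := (hlaw (0, [])).isProbabilityMeasure_iff.1 inferInstance
  have hR : 0 < R := pos_of_mul_pos_right ((abs_nonneg t).trans_lt ht) (by positivity)
  have hzero : 0 ∈ interior (integrableExpSet id ν) :=
    mem_interior.2 ⟨_, hν, isOpen_Ioo, neg_neg_of_pos hR, hR⟩
  have hsum (s : ℝ) := summable_mul_cgf_div hzero hmean (summable_inv_card_sphereW hd) s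
  have hfin {s : ℝ} (hs : |s| < (d + 1) * R) (n : ℕ) := integrable_exp_and_cgf_sphAvg hd0 hindep
    hlaw (fun l => hν (div_mem_Ioo_of_abs_lt hd0 hs l)) n
  have hcgf {s : ℝ} (hs : |s| < (d + 1) * R) : Tendsto (fun n => cgf (sphAvg d Y (n + 1)) P s) atTop
      (𝓝 (∑' l : ℕ, ((d + 1) * d ^ l : ℝ) * cgf id ν (s / ((d + 1) * d ^ l)))) := by
    simp only [(hfin hs _).2]
    exact (tendsto_add_atTop_iff_nat 1).2 (hsum s).tendsto_sum_tsum_nat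
  obtain ⟨q, hq, hqt⟩ := exists_one_lt_abs_mul_lt ht
  obtain ⟨C, hC⟩ := (hcgf hqt).bddAbove_range
  have hmgf_le (n : ℕ) : mgf (sphAvg d Y (n + 1)) P (q * t) ≤ Real.exp C := by
    rw [← exp_cgf (hfin hqt n).1]
    exact Real.exp_le_exp.2 (hC ⟨n, rfl⟩)
  obtain ⟨hint, hlim⟩ := integrable_exp_and_tendsto_mgf_of_mgf_le hq
    (fun n => aemeasurable_sphAvg (fun v => (hlaw v).aemeasurable) (n + 1))
    (fun n => (hfin hqt n).1) hmgf_le (hH.mono fun ω hω => (tendsto_add_atTop_iff_nat 1).2 hω)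
  refine ⟨hint, (tendsto_add_atTop_iff_nat 1).1 hlim, ?_⟩
  have hcgf_eq := tendsto_nhds_unique (hlim.log (mgf_pos hint).ne') (hcgf ht)
  rw [cgf, hcgf_eq]
  exact (hsum t).hasSum

end FreeHeightField

/-- The moment generating function of the a.s. limit `H` of the spherical
averages of the free height field is finite on `(-(d+1)R, (d+1)R)` and is the limit of the
finite-volume mgfs; its logarithm is the absolutely convergent series
`Σ_{l≥0} (d+1)d^l log ψ(t/((d+1)d^l))`. -/
theorem free_limit_mgf
    {Ω : Type} [MeasurableSpace Ω] (P : Measure Ω) [IsProbabilityMeasure P]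
    (d : ℕ) (hd : 2 ≤ d)
    (p : ℤ → ℝ) (hp0 : ∀ j, 0 ≤ p j) (hpsum : Summable p) (hp1 : ∑' j, p j = 1)
    (hsymm : ∀ j, p (-j) = p j)
    (R : ℝ) (hR : 0 < R)
    (hψ : ∀ s : ℝ, |s| < R → Summable (fun j : ℤ => Real.exp (s * j) * p j))
    (Y : Vertex d → Ω → ℤ) (hmeas : ∀ v, Measurable (Y v))
    (hindep : iIndepFun Y P)
    (hlaw : ∀ v (j : ℤ), P {ω | Y v ω = j} = ENNReal.ofReal (p j))
    (H : Ω → ℝ) (hHmeas : Measurable H)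
    (hH : ∀ᵐ ω ∂P, Tendsto (fun r => sphAvg d (fun v ω => (Y v ω : ℝ)) r ω) atTop (𝓝 (H ω))) :
    ∀ t : ℝ, |t| < ((d : ℝ) + 1) * R →
      Integrable (fun ω => Real.exp (t * H ω)) P ∧
      Tendsto (fun r => ∫ ω, Real.exp (t * sphAvg d (fun v ω => (Y v ω : ℝ)) r ω) ∂P)
        atTop (𝓝 (∫ ω, Real.exp (t * H ω) ∂P)) ∧
      Summable (fun l : ℕ =>
        |(((d : ℝ) + 1) * (d : ℝ) ^ l) *
          Real.log (∑' j : ℤ, Real.exp ((t / (((d : ℝ) + 1) * (d : ℝ) ^ l)) * j) * p j)|) ∧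
      Real.log (∫ ω, Real.exp (t * H ω) ∂P) =
        ∑' l : ℕ, (((d : ℝ) + 1) * (d : ℝ) ^ l) *
          Real.log (∑' j : ℤ, Real.exp ((t / (((d : ℝ) + 1) * (d : ℝ) ^ l)) * j) * p j) := by
  intro t ht
  have hν : Set.Ioo (-R) R ⊆ integrableExpSet id (intLaw p) := fun s hs =>
    (mem_integrableExpSet_intLaw_iff hp0).2 (hψ s (abs_lt.2 hs))
  have := isNegInvariant_intLaw hsymm
  have hindep_cast : iIndepFun (fun v ω => (Y v ω : ℝ)) P :=
    hindep.comp (fun _ (j : ℤ) => (j : ℝ)) fun _ => measurable_of_countable _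
  obtain ⟨hint, hlim, hsum⟩ := free_limit_mgf_general hd hindep_cast
    (fun v => hasLaw_intLaw (hmeas v) (hlaw v)) hν (integral_id_eq_zero_of_isNegInvariant _) hH ht
  simp only [cgf, mgf_id_intLaw hp0] at hsum
  exact ⟨hint, hlim, hsum.summable.abs, hsum.tsum_eq.symm⟩
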